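/- With y_1,…,y_n and ȳ_1,…,ȳ_n the unique elements of V satisfying D_n = ∂^n + ∑_{i=1}^{n} M_{y_i}∘∂^{n−i} and \bar{D}_n = ∂^n + ∑_{i=1}^{n} ∂^{n−i}∘M_{ȳ_i}, one has ȳ_i = (−1)^i·y_i for all i = 1,…,n. -/

import Mathlib

/-!
Let `*` denote the formal adjoint on differential operators, the anti-automorphism that fixes each
`M_g` and sends `∂` to `-∂`. By the skew-symmetry `F_{ij} = -F_{j'i'}`, the matrix `D̄_n` is minus the
adjoint of `D_n`, reflected in the antidiagonal (`DtopD_eq`, `DbotD_eq`). For Hessenberg matrices with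
constant superdiagonal the column-determinant is a signed sum, over compositions of `n`, of ordered
products of entries, and the reflection exactly reverses these products; hence
`cdet D̄_n = (-1)ⁿ (cdet D_n)*`. Taking adjoints in `cdet D_n = ∂ⁿ + ∑ yᵢ ∂ⁿ⁻ⁱ` then yields
`∂ⁿ + ∑ ∂ⁿ⁻ⁱ (-1)ⁱ yᵢ`.

Since `*` is not defined on all of `End V`, operators are handled through their symbols: a polynomial
`p = ∑ pₖ Xᵏ` over `V` yields both `leftOp p = ∑ pₖ ∂ᵏ` and its adjoint `rightOp p = ∑ (-∂)ᵏ pₖ`.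
Left multiplication of the first by a generator `M_g` or `∂` is a transformation of symbols that
multiplies the second on the right by `M_g` or `-∂`. The determinants are computed recursively:
`cdet_topLeft_succ` comes from Laplace expansion along the last column, and `forward_eq_backward`
turns it, for `D_n`, into a recursion by left multiplications. One sequence of symbols, `symbolSeq`,
then describes both determinants (`cdet_topMat`, `cdet_botMat`).

Existence and uniqueness of the `yᵢ` and `ȳᵢ` hold because `symbolSeq` is monic and both `leftOp` and
`rightOp` are injective. For `leftOp` one evaluates at a variable `F^{(s)}` with `s` large, which the
coefficients do not involve.
-/

noncomputable section

open MvPolynomial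

/-- The column-determinant of a square matrix over a (possibly noncommutative) ring. -/
def cdet {R : Type*} [Ring R] {m : ℕ} (A : Matrix (Fin m) (Fin m) R) : R :=
  ∑ σ : Equiv.Perm (Fin m),
    (Equiv.Perm.sign σ : ℤ) • ((List.finRange m).map (fun i => A (σ i) i)).prod

/-- Index set for the variables in type `D` (`N = 2n`): `0`-based pairs `(k,l)` with `k ≥ l`
and `k + l ≤ N − 2` (i.e. `1`-based `k ≥ l`, `k + l ≤ N`). -/
def IdxD (n : ℕ) :=
  {p : Fin (2 * n) × Fin (2 * n) //
    (p.2 : ℕ) ≤ (p.1 : ℕ) ∧ (p.1 : ℕ) + (p.2 : ℕ) ≤ 2 * n - 2}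

instance (n : ℕ) : Fintype (IdxD n) := Subtype.fintype _

/-- `V`: the polynomial algebra in the variables `F_{kl}^{(s)}` for the basis pairs. -/
abbrev VD (n : ℕ) := MvPolynomial (IdxD n × ℕ) ℂ

/-- The derivation `δ` with `δ(F_{kl}^{(s)}) = F_{kl}^{(s+1)}`. -/
def delD (n : ℕ) : Derivation ℂ (VD n) (VD n) :=
  MvPolynomial.mkDerivation ℂ (fun v => X (v.1, v.2 + 1))

/-- `∂ := δ` as a `ℂ`-linear endomorphism of `V`. -/
def DelD (n : ℕ) : Module.End ℂ (VD n) := (delD n).toLinearMap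

/-- `M_g`: multiplication by `g ∈ V`. -/
def MD (n : ℕ) (g : VD n) : Module.End ℂ (VD n) := LinearMap.mulLeft ℂ g

/-- The element `F_{ij} ∈ V` for `i ≥ j`: the variable for basis pairs, `0` on the
antidiagonal (`F_{k,k'} = 0`), and `−F_{j'i'}` otherwise. -/
def FvarD (n : ℕ) (i j : Fin (2 * n)) (hji : (j : ℕ) ≤ (i : ℕ)) : VD n :=
  if h : (i : ℕ) + (j : ℕ) ≤ 2 * n - 2 then X (⟨(i, j), ⟨hji, h⟩⟩, 0)
  else if h2 : (i : ℕ) + (j : ℕ) = 2 * n - 1 then 0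
  else
    -(X (⟨((⟨2 * n - 1 - (j : ℕ), by have := j.isLt; omega⟩ : Fin (2 * n)),
          (⟨2 * n - 1 - (i : ℕ), by have := i.isLt; omega⟩ : Fin (2 * n))),
        by constructor <;> · have := i.isLt; have := j.isLt; simp only []; omega⟩, 0) : VD n)

/-- The matrix `D_j` (`j ≤ n`): the `(a,b)` entry is `δ_{ab}∂ + M_{F_{ab}}` for `a ≥ b` when
`a ≤ n−1`; row `n` has entries `M_{F_{n,b} − F_{n',b}}` for `b < n` and `∂ + M_{F_{nn}}` at
`(n,n)`; the superdiagonal entries are `+1` and the entries above it vanish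
(`1`-based description; `0`-based in the code). -/
def DtopD (n : ℕ) (j : ℕ) (hj : j ≤ n) : Matrix (Fin j) (Fin j) (Module.End ℂ (VD n)) :=
  Matrix.of fun a b =>
    if h : (b : ℕ) ≤ (a : ℕ) then
      (if a = b then DelD n else 0) +
        MD n
          (if hc : (a : ℕ) = n - 1 ∧ (b : ℕ) < n - 1 then
            FvarD n (⟨(a : ℕ), by have := a.isLt; omega⟩ : Fin (2 * n))
                (⟨(b : ℕ), by have := b.isLt; omega⟩ : Fin (2 * n)) h -
              FvarD n (⟨n, by have := b.isLt; omega⟩ : Fin (2 * n))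
                (⟨(b : ℕ), by have := b.isLt; omega⟩ : Fin (2 * n))
                (by simp only [Fin.val_mk]; have := b.isLt; omega)
          else
            FvarD n (⟨(a : ℕ), by have := a.isLt; omega⟩ : Fin (2 * n))
              (⟨(b : ℕ), by have := b.isLt; omega⟩ : Fin (2 * n)) h)
    else if (b : ℕ) = (a : ℕ) + 1 then 1 else 0

/-- The matrix `D̄_k` (`k ≤ n`): writing `a = k+1−c`, `b = k+1−d` (`1`-based), the `(c,d)`
entry for `c ≥ d` is `δ_{ab}∂ + M_{F_{a',b'}}`, except that when `k = n` and `b = n` (i.e. `d`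
is the first column) it is `δ_{ab}∂ + M_{F_{a',n'} − F_{a',n}}`; the superdiagonal entries are
`−1` and the entries above it vanish. -/
def DbotD (n : ℕ) (k : ℕ) (hk : k ≤ n) : Matrix (Fin k) (Fin k) (Module.End ℂ (VD n)) :=
  Matrix.of fun c d =>
    if h : (d : ℕ) ≤ (c : ℕ) then
      (if c = d then DelD n else 0) +
        MD n
          (if hc : k = n ∧ (d : ℕ) = 0 then
            FvarD n (⟨2 * n - k + (c : ℕ), by have := c.isLt; omega⟩ : Fin (2 * n))
                (⟨2 * n - k + (d : ℕ), by have := c.isLt; omega⟩ : Fin (2 * n))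
                (by simp only [Fin.val_mk]; have := c.isLt; omega) -
              FvarD n (⟨2 * n - k + (c : ℕ), by have := c.isLt; omega⟩ : Fin (2 * n))
                (⟨n - 1, by have := c.isLt; omega⟩ : Fin (2 * n))
                (by simp only [Fin.val_mk]; have := c.isLt; omega)
          else
            FvarD n (⟨2 * n - k + (c : ℕ), by have := c.isLt; omega⟩ : Fin (2 * n))
              (⟨2 * n - k + (d : ℕ), by have := d.isLt; omega⟩ : Fin (2 * n))
              (by simp only [Fin.val_mk]; have := c.isLt; have := d.isLt; omega))
    else if (d : ℕ) = (c : ℕ) + 1 then -1 else 0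

/-! ### Hessenberg column-determinants over a noncommutative ring -/

section Hessenberg

variable {R : Type*} [Ring R]

theorem cdet_zero_size (A : Matrix (Fin 0) (Fin 0) R) : cdet A = 1 := by
  simp [cdet]

theorem cdet_one_size (A : Matrix (Fin 1) (Fin 1) R) : cdet A = A 0 0 := by
  simp [cdet, List.finRange_succ]

theorem cdet_permute {m : ℕ} (π : Equiv.Perm (Fin m)) (A : Matrix (Fin m) (Fin m) R) :
    cdet (Matrix.of fun i j => A (π i) j) = (Equiv.Perm.sign π : ℤ) • cdet A := by
  unfold cdet
  rw [Finset.smul_sum]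
  refine Fintype.sum_equiv (Equiv.mulLeft π) _ _ fun σ => ?_
  simp only [Matrix.of_apply, Equiv.coe_mulLeft, Equiv.Perm.sign_mul, Units.val_mul, Equiv.Perm.mul_apply, smul_smul,
    ← mul_assoc, Int.units_coe_mul_self, one_mul]

/-- Laplace expansion along the first column: in a column-determinant the entry of the first
column is the leftmost factor, so commutativity is not needed. -/
theorem cdet_succ_first {m : ℕ} (A : Matrix (Fin (m + 1)) (Fin (m + 1)) R) :
    cdet A = ∑ r : Fin (m + 1),
      (-1 : ℤ) ^ (r : ℕ) • (A r 0 * cdet (A.submatrix r.succAbove Fin.succ)) := by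
  have key : ∀ r : Fin (m + 1), (-1 : ℤ) ^ (r : ℕ) • (A r 0 * cdet (A.submatrix r.succAbove Fin.succ))
      = ∑ σ : Equiv.Perm (Fin m), (Equiv.Perm.sign (Equiv.Perm.decomposeFin.symm (r, σ)) : ℤ) •
        ((List.finRange (m + 1)).map
          (fun i => A (Equiv.Perm.decomposeFin.symm (r, σ) i) i)).prod := by
    intro r
    refine Fin.cases ?_ (fun i => ?_) r
    · simp [cdet, Finset.mul_sum, List.finRange_succ, Function.comp_def, -zsmul_eq_mul]
    · have h1 : cdet (A.submatrix (Fin.succ i).succAbove Fin.succ) =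
          (Equiv.Perm.sign i.cycleRange : ℤ) • cdet
            (Matrix.of fun k l => A ((Fin.succ i).succAbove (i.cycleRange k)) (Fin.succ l)) := by
        have h := cdet_permute i.cycleRange (A.submatrix (Fin.succ i).succAbove Fin.succ)
        simp only [Matrix.submatrix_apply] at h
        rw [h, smul_smul, Int.units_coe_mul_self, one_smul]
      rw [h1, Fin.sign_cycleRange, mul_smul_comm, smul_smul]
      unfold cdet
      rw [Finset.mul_sum,
        Finset.smul_sum]
      refine Finset.sum_congr rfl fun σ _ => ?_
      rw [Equiv.Perm.decomposeFin.symm_sign, if_neg (Fin.succ_ne_zero i)]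
      have h2 : (-1 : ℤ) ^ ((Fin.succ i : Fin (m + 1)) : ℕ) * (((-1 : ℤˣ) ^ (i : ℕ) : ℤˣ) : ℤ)
          = -1 := by
        rw [Fin.val_succ, pow_succ]
        push_cast
        rw [mul_right_comm, ← pow_add, ← two_mul, pow_mul]
        simp
      rw [h2]
      simp [List.finRange_succ, Function.comp_def, Fin.succAbove_cycleRange,
        -zsmul_eq_mul, Equiv.Perm.decomposeFin_symm_apply_succ]
  rw [Finset.sum_congr rfl fun r _ => key r]
  rw [cdet, Finset.univ_perm_fin_succ, ← Finset.univ_product_univ]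
  simp only [Finset.sum_map, Equiv.toEmbedding_apply, Finset.sum_product]

/-- Reversing the order of both rows and columns reverses every product, hence turns the
column-determinant into the one computed in the opposite ring. -/
theorem cdet_rev {m : ℕ} (A : Matrix (Fin m) (Fin m) R) :
    cdet (R := Rᵐᵒᵖ) (Matrix.of fun i j => MulOpposite.op (A i.rev j.rev)) = MulOpposite.op (cdet A) := by
  unfold cdet
  rw [Finset.op_sum]
  refine Fintype.sum_equiv (Equiv.permCongr Fin.revPerm) _ _ fun σ => ?_
  rw [MulOpposite.op_smul, MulOpposite.op_list_prod, Equiv.Perm.sign_permCongr]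
  congr 2
  rw [← List.map_reverse, ← List.map_reverse, List.finRange_reverse]
  simp [Function.comp_def]

/-- Laplace expansion along the last column. -/
theorem cdet_succ_last {m : ℕ} (A : Matrix (Fin (m + 1)) (Fin (m + 1)) R) :
    cdet A = ∑ r : Fin (m + 1), (-1 : ℤ) ^ (m - (r : ℕ)) •
      (cdet (A.submatrix r.succAbove Fin.castSucc) * A r (Fin.last m)) := by
  apply MulOpposite.op_injective
  rw [← cdet_rev, cdet_succ_first, Finset.op_sum]
  refine Fintype.sum_equiv Fin.revPerm _ _ fun r => ?_
  rw [MulOpposite.op_smul, MulOpposite.op_mul, ← cdet_rev]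
  congr 2
  · have := r.isLt
    simp only [Fin.revPerm_apply, Fin.val_rev]
    omega
  · congr 1
    ext i j
    simp [Fin.rev_succ, Fin.rev_succAbove]

/-- The leading `m × m` block of an infinite matrix. -/
def topLeft (A : ℕ → ℕ → R) (m : ℕ) : Matrix (Fin m) (Fin m) R :=
  Matrix.of fun i j => A i j

/-- The leading `(k+1) × (k+1)` block of an infinite matrix, with its last row replaced by `u`. -/
def lastRow (A : ℕ → ℕ → R) (u : ℕ → R) (k : ℕ) : Matrix (Fin (k + 1)) (Fin (k + 1)) R :=
  Matrix.of fun i j => if (i : ℕ) < k then A i j else u j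

omit [Ring R] in
theorem lastRow_self (A : ℕ → ℕ → R) (k : ℕ) : lastRow A (A k) k = topLeft A (k + 1) := by
  ext i j
  have := i.isLt
  by_cases h : (i : ℕ) < k
  · simp [lastRow, topLeft, h]
  · have h' : (i : ℕ) = k := by omega
    simp [lastRow, topLeft, h']

/-- The last column of a Hessenberg matrix has only two nonzero entries, and deleting either of
their rows leaves a matrix of the same shape. -/
theorem cdet_lastRow_succ (A : ℕ → ℕ → R) (c : ℤ) (hA : ∀ i j, i + 1 < j → A i j = 0)
    (hc : ∀ i, A i (i + 1) = (c : R)) (u : ℕ → R) (k : ℕ) :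
    cdet (lastRow A u (k + 1)) =
      cdet (topLeft A (k + 1)) * u (k + 1) - c • cdet (lastRow A u k) := by
  rw [cdet_succ_last, Fin.sum_univ_castSucc, Fin.sum_univ_castSucc, Finset.sum_eq_zero, zero_add]
  · have e1 : (lastRow A u (k + 1)).submatrix (Fin.last (k + 1)).succAbove Fin.castSucc
        = topLeft A (k + 1) := by
      ext i j
      have := i.isLt
      simp [lastRow, topLeft]
      omega
    have e2 : (lastRow A u (k + 1)).submatrix ((Fin.last k).castSucc).succAbove Fin.castSucc
        = lastRow A u k := by
      ext i j
      have := i.isLt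
      by_cases h : (i : ℕ) < k
      · rw [Matrix.submatrix_apply, Fin.succAbove_of_castSucc_lt _ _ (by simp [Fin.lt_def, h])]
        simp [lastRow, h]
        omega
      · rw [Matrix.submatrix_apply, Fin.succAbove_of_le_castSucc _ _
          (by simp [Fin.le_def]; omega)]
        have h' : (i : ℕ) = k := by omega
        simp [lastRow, h']
    rw [e1, e2]
    simp [lastRow, hc, sub_eq_add_neg, add_comm, (Int.cast_commute c _).eq]
  · intro i _
    have := i.isLt
    have : lastRow A u (k + 1) i.castSucc.castSucc (Fin.last (k + 1)) = 0 := by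
      simp only [lastRow, Matrix.of_apply, Fin.val_castSucc, Fin.val_last]
      rw [if_pos (by omega)]
      exact hA _ _ (by omega)
    rw [this]
    simp

theorem cdet_lastRow (A : ℕ → ℕ → R) (c : ℤ) (hA : ∀ i j, i + 1 < j → A i j = 0)
    (hc : ∀ i, A i (i + 1) = (c : R)) (u : ℕ → R) (k : ℕ) :
    cdet (lastRow A u k) =
      ∑ j ∈ Finset.range (k + 1), (-c) ^ (k - j) • (cdet (topLeft A j) * u j) := by
  induction k with
  | zero => simp [cdet_one_size, cdet_zero_size, lastRow]
  | succ k ih =>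
    rw [cdet_lastRow_succ A c hA hc, ih, Finset.sum_range_succ _ (k + 1), Finset.smul_sum,
      sub_eq_neg_add, ← Finset.sum_neg_distrib]
    congr 1
    · refine Finset.sum_congr rfl fun j hj => ?_
      rw [Finset.mem_range] at hj
      rw [smul_smul, ← neg_smul, show k + 1 - j = (k - j) + 1 by omega, pow_succ]
      congr 1
      ring
    · simp

/-- The recursion satisfied by the leading principal column-minors of a lower Hessenberg matrix
whose superdiagonal is the integer constant `c`. -/
theorem cdet_topLeft_succ (A : ℕ → ℕ → R) (c : ℤ) (hA : ∀ i j, i + 1 < j → A i j = 0)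
    (hc : ∀ i, A i (i + 1) = (c : R)) (k : ℕ) :
    cdet (topLeft A (k + 1)) =
      ∑ j ∈ Finset.range (k + 1), (-c) ^ (k - j) • (cdet (topLeft A j) * A k j) := by
  rw [← lastRow_self, cdet_lastRow A c hA hc]

/-- Forward and backward summation over the compositions of `n` agree: both recursions equate
`∑ E j * B k j * F (k + 1)` with a sum of the `E i * F i`. -/
theorem forward_eq_backward (n : ℕ) (B : ℕ → ℕ → R) (E F : ℕ → R) (hE0 : E 0 = 1) (hFn : F n = 1)
    (hE : ∀ k < n, E (k + 1) = ∑ j ∈ Finset.range (k + 1), E j * B k j)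
    (hF : ∀ j < n, F j = ∑ k ∈ Finset.Ico j n, B k j * F (k + 1)) : E n = F 0 := by
  have h1 : ∑ k ∈ Finset.range n, E (k + 1) * F (k + 1) = ∑ j ∈ Finset.range n, E j * F j := by
    calc ∑ k ∈ Finset.range n, E (k + 1) * F (k + 1)
        = ∑ k ∈ Finset.range n, ∑ j ∈ Finset.range (k + 1), E j * B k j * F (k + 1) := by
          refine Finset.sum_congr rfl fun k hk => ?_
          rw [hE k (Finset.mem_range.1 hk), Finset.sum_mul]
      _ = ∑ j ∈ Finset.range n, ∑ k ∈ Finset.Ico j n, E j * B k j * F (k + 1) := by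
          refine Finset.sum_comm' fun k j => ?_
          simp only [Finset.mem_range, Finset.mem_Ico]
          omega
      _ = ∑ j ∈ Finset.range n, E j * F j := by
          refine Finset.sum_congr rfl fun j hj => ?_
          rw [hF j (Finset.mem_range.1 hj), Finset.mul_sum]
          simp only [mul_assoc]
  have h2 := Finset.sum_range_succ (fun j => E j * F j) n
  rw [Finset.sum_range_succ', h1, hE0, hFn] at h2
  simpa using (add_left_cancel h2).symm

end Hessenberg

/-! ### Differential operators and their formal adjoints -/

section Operators

variable (n : ℕ)

theorem MD_apply (g f : VD n) : MD n g f = g * f := rfl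

theorem DelD_apply (f : VD n) : DelD n f = delD n f := rfl

theorem MD_add (g h : VD n) : MD n (g + h) = MD n g + MD n h := (LinearMap.mul ℂ (VD n)).map_add g h

theorem MD_smul (c : ℂ) (g : VD n) : MD n (c • g) = c • MD n g :=
  (LinearMap.mul ℂ (VD n)).map_smul c g

theorem MD_mul (g h : VD n) : MD n (g * h) = MD n g * MD n h := by
  refine LinearMap.ext fun f => ?_
  rw [Module.End.mul_apply, MD_apply, MD_apply, MD_apply, mul_assoc]

theorem MD_one : MD n 1 = 1 := by
  refine LinearMap.ext fun f => ?_
  rw [MD_apply, one_mul, Module.End.one_apply]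

theorem DelD_mul_MD (g : VD n) : DelD n * MD n g = MD n g * DelD n + MD n (delD n g) := by
  refine LinearMap.ext fun f => ?_
  rw [LinearMap.add_apply, Module.End.mul_apply, Module.End.mul_apply, MD_apply, MD_apply, MD_apply,
    DelD_apply, DelD_apply, Derivation.leibniz, smul_eq_mul, smul_eq_mul, mul_comm f]

theorem mul_MD_neg (T : Module.End ℂ (VD n)) (g : VD n) :
    T * MD n (-g) = -(T * MD n g) := by
  refine LinearMap.ext fun f => ?_
  rw [LinearMap.neg_apply, Module.End.mul_apply, Module.End.mul_apply, MD_apply, MD_apply, neg_mul,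
    map_neg]

theorem neg_DelD_mul (S : Module.End ℂ (VD n)) : -DelD n * S = -(DelD n * S) := by
  refine LinearMap.ext fun f => ?_
  simp only [LinearMap.neg_apply, Module.End.mul_apply]

theorem mul_neg_DelD_mul (T S : Module.End ℂ (VD n)) :
    T * (-DelD n * S) = -(T * (DelD n * S)) := by
  refine LinearMap.ext fun f => ?_
  simp only [LinearMap.neg_apply, Module.End.mul_apply, map_neg]

theorem MD_mul_comm (g h : VD n) : MD n g * MD n h = MD n h * MD n g := by
  rw [← MD_mul, ← MD_mul, mul_comm]

/-- The normally ordered differential operator `∑ₖ pₖ ∂ᵏ` attached to a symbol `p = ∑ₖ pₖ Xᵏ`. -/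
def leftOp : Polynomial (VD n) →ₗ[ℂ] Module.End ℂ (VD n) :=
  Polynomial.lsum fun k => LinearMap.mulRight ℂ (DelD n ^ k) ∘ₗ LinearMap.mul ℂ (VD n)

/-- The operator `∑ₖ (-∂)ᵏ pₖ` attached to a symbol `p = ∑ₖ pₖ Xᵏ`; it is the formal adjoint of
`leftOp n p` for the anti-automorphism fixing multiplications and negating `∂`. -/
def rightOp : Polynomial (VD n) →ₗ[ℂ] Module.End ℂ (VD n) :=
  Polynomial.lsum fun k =>
    LinearMap.mulLeft ℂ ((-DelD n) ^ k) ∘ₗ LinearMap.mul ℂ (VD n)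

/-- The derivation `δ` applied to every coefficient of a symbol. -/
def coeffDel : Polynomial (VD n) →ₗ[ℂ] Polynomial (VD n) :=
  Polynomial.lsum fun k =>
    (Polynomial.monomial k).restrictScalars ℂ ∘ₗ (delD n).toLinearMap

theorem leftOp_monomial (k : ℕ) (a : VD n) :
    leftOp n (Polynomial.monomial k a) = MD n a * DelD n ^ k := by
  rw [leftOp, Polynomial.lsum_apply, Polynomial.sum_monomial_index _ _ (LinearMap.map_zero _)]
  rfl

theorem rightOp_monomial (k : ℕ) (a : VD n) :
    rightOp n (Polynomial.monomial k a) = (-DelD n) ^ k * MD n a := by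
  rw [rightOp, Polynomial.lsum_apply, Polynomial.sum_monomial_index _ _ (LinearMap.map_zero _)]
  rfl

theorem coeffDel_monomial (k : ℕ) (a : VD n) :
    coeffDel n (Polynomial.monomial k a) = Polynomial.monomial k (delD n a) := by
  rw [coeffDel, Polynomial.lsum_apply, Polynomial.sum_monomial_index _ _ (LinearMap.map_zero _)]
  rfl

theorem coeff_coeffDel (p : Polynomial (VD n)) (k : ℕ) :
    (coeffDel n p).coeff k = delD n (p.coeff k) := by
  induction p using Polynomial.induction_on' with
  | add p q hp hq => simp [hp, hq]
  | monomial m a =>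
    rw [coeffDel_monomial, Polynomial.coeff_monomial, Polynomial.coeff_monomial]
    split_ifs <;> simp

theorem leftOp_C_mul (g : VD n) (p : Polynomial (VD n)) :
    leftOp n (Polynomial.C g * p) = MD n g * leftOp n p := by
  induction p using Polynomial.induction_on' with
  | add p q hp hq => simp [mul_add, hp, hq]
  | monomial m a => rw [Polynomial.C_mul_monomial, leftOp_monomial, leftOp_monomial, MD_mul, mul_assoc]

theorem rightOp_C_mul (g : VD n) (p : Polynomial (VD n)) :
    rightOp n (Polynomial.C g * p) = rightOp n p * MD n g := by
  induction p using Polynomial.induction_on' with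
  | add p q hp hq => simp [mul_add, add_mul, hp, hq]
  | monomial m a =>
    rw [Polynomial.C_mul_monomial, rightOp_monomial, rightOp_monomial, mul_comm g, MD_mul, mul_assoc]

/-- Left multiplication by `∂` on operators corresponds to `p ↦ X p + δ p` on symbols. -/
theorem leftOp_X_mul (p : Polynomial (VD n)) :
    leftOp n (Polynomial.X * p + coeffDel n p) = DelD n * leftOp n p := by
  induction p using Polynomial.induction_on' with
  | add p q hp hq =>
    rw [map_add (leftOp n) p q, mul_add (DelD n), ← hp, ← hq, ← map_add]
    congr 1
    rw [map_add, mul_add]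
    abel
  | monomial m a =>
    rw [Polynomial.X_mul_monomial, coeffDel_monomial, map_add, leftOp_monomial, leftOp_monomial,
      leftOp_monomial, ← mul_assoc, DelD_mul_MD, pow_succ', add_mul, mul_assoc]

/-- The adjoint counterpart of `leftOp_X_mul`: right multiplication by `-∂`. -/
theorem rightOp_X_mul (p : Polynomial (VD n)) :
    rightOp n (Polynomial.X * p + coeffDel n p) = -(rightOp n p * DelD n) := by
  induction p using Polynomial.induction_on' with
  | add p q hp hq =>
    rw [map_add (rightOp n) p q, add_mul, neg_add, ← hp, ← hq, ← map_add]
    congr 1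
    rw [map_add, mul_add]
    abel
  | monomial m a =>
    have h : MD n a * DelD n = DelD n * MD n a - MD n (delD n a) := by
      rw [DelD_mul_MD]
      abel
    rw [Polynomial.X_mul_monomial, coeffDel_monomial, map_add, rightOp_monomial, rightOp_monomial,
      rightOp_monomial, mul_assoc, h, pow_succ, mul_sub, mul_assoc,
      mul_neg_DelD_mul]
    abel

theorem leftOp_zsmul (c : ℤ) (p : Polynomial (VD n)) : leftOp n (c • p) = c • leftOp n p :=
  map_zsmul _ _ _

theorem rightOp_zsmul (c : ℤ) (p : Polynomial (VD n)) : rightOp n (c • p) = c • rightOp n p :=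
  map_zsmul _ _ _

/-- Every operator `∑ₖ (-∂)ᵏ pₖ` can be normally ordered, with a symbol `q` whose adjoint operator is
`∑ₖ pₖ ∂ᵏ`. This transfers injectivity from `leftOp` to `rightOp`. -/
theorem exists_reorder (p : Polynomial (VD n)) :
    ∃ q : Polynomial (VD n), leftOp n q = rightOp n p ∧ rightOp n q = leftOp n p := by
  induction p using Polynomial.induction_on' with
  | add p q hp hq =>
    obtain ⟨p', h1, h2⟩ := hp
    obtain ⟨q', h3, h4⟩ := hq
    exact ⟨p' + q', by simp [h1, h3], by simp [h2, h4]⟩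
  | monomial m a =>
    rw [rightOp_monomial, leftOp_monomial]
    induction m with
    | zero =>
      refine ⟨Polynomial.monomial 0 a, ?_, ?_⟩
      · rw [leftOp_monomial]; simp
      · rw [rightOp_monomial]; simp
    | succ m ih =>
      obtain ⟨q, h1, h2⟩ := ih
      refine ⟨-(Polynomial.X * q + coeffDel n q), ?_, ?_⟩
      · rw [map_neg, leftOp_X_mul, h1, pow_succ', mul_assoc, neg_DelD_mul]
      · rw [map_neg, rightOp_X_mul, h2, pow_succ, neg_neg, mul_assoc]

theorem DelD_pow_X (v : IdxD n) (s k : ℕ) :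
    (DelD n ^ k) (X (v, s) : VD n) = X (v, s + k) := by
  induction k with
  | zero => simp
  | succ k ih =>
    rw [pow_succ', Module.End.mul_apply, ih, DelD_apply, delD, mkDerivation_X]
    rfl

/-- A normally ordered differential operator determines its symbol: apply it to a variable
`F^{(s)}` with `s` beyond every variable occurring in the coefficients, and differentiate with
respect to `F^{(s + k)}`. -/
theorem leftOp_eq_zero (hn : 2 ≤ n) (p : Polynomial (VD n)) (hp : leftOp n p = 0) : p = 0 := by
  classical
  let v : IdxD n := ⟨(⟨0, by omega⟩, ⟨0, by omega⟩), by simp⟩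
  let S : Finset (IdxD n × ℕ) := p.support.biUnion fun k => (p.coeff k).vars
  obtain ⟨s, hs⟩ : ∃ s, ∀ x ∈ S, x.2 < s :=
    ⟨(S.sup fun x => x.2) + 1, fun x hx =>
      Nat.lt_succ_of_le (Finset.le_sup (f := fun x : IdxD n × ℕ => x.2) hx)⟩
  have hvars : ∀ j k, pderiv (v, s + k) (p.coeff j) = 0 := by
    intro j k
    apply pderiv_eq_zero_of_notMem_vars
    intro hmem
    by_cases hj : j ∈ p.support
    · have := hs _ (Finset.mem_biUnion.2 ⟨j, hj, hmem⟩)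
      simp at this
    · rw [Polynomial.notMem_support_iff.1 hj] at hmem
      simp at hmem
  have happ : ∑ j ∈ p.support, p.coeff j * X (v, s + j) = 0 := by
    have h := congrArg (fun T : Module.End ℂ (VD n) => T (X (v, s))) hp
    rw [leftOp, Polynomial.lsum_apply, Polynomial.sum_def] at h
    simp only [LinearMap.sum_apply, LinearMap.zero_apply] at h
    rw [← h]
    refine Finset.sum_congr rfl fun j _ => ?_
    rw [← DelD_pow_X]
    rfl
  ext1 k
  have h := congrArg (pderiv (v, s + k)) happ
  rw [map_sum, map_zero] at h
  by_cases hk : k ∈ p.support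
  · rw [Finset.sum_eq_single k] at h
    · simpa [hvars] using h
    · intro j _ hjk
      rw [Derivation.leibniz, hvars, pderiv_X_of_ne]
      · simp
      · simp; omega
    · exact fun h' => absurd hk h'
  · simpa using hk

theorem leftOp_injective (hn : 2 ≤ n) : Function.Injective (leftOp n) :=
  (injective_iff_map_eq_zero _).2 (leftOp_eq_zero n hn)

/-- If `∑ₖ (-∂)ᵏ pₖ = 0`, its normally ordered symbol `q` vanishes, hence so does the adjoint
`∑ₖ pₖ ∂ᵏ` of `leftOp n q`, and finally `p` itself. -/
theorem rightOp_injective (hn : 2 ≤ n) : Function.Injective (rightOp n) := by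
  refine (injective_iff_map_eq_zero _).2 fun p hp => ?_
  obtain ⟨q, h1, h2⟩ := exists_reorder n p
  have hq : q = 0 := leftOp_eq_zero n hn q (h1.trans hp)
  rw [hq, map_zero] at h2
  exact leftOp_eq_zero n hn p h2.symm

/-! ### Symbols of the two determinants -/

/-- The lower Hessenberg matrix with superdiagonal `1` and entries `δ_{ij} ∂ + g_{ij}`, `i ≥ j`. -/
def topMat (g : ℕ → ℕ → VD n) (i j : ℕ) : Module.End ℂ (VD n) :=
  if j ≤ i then (if i = j then DelD n else 0) + MD n (g i j) else if j = i + 1 then 1 else 0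

/-- Minus the adjoint of `topMat n g`, reflected in the antidiagonal of the leading `n × n`
block. -/
def botMat (g : ℕ → ℕ → VD n) (i j : ℕ) : Module.End ℂ (VD n) :=
  if j ≤ i then (if i = j then DelD n else 0) + MD n (-g (n - 1 - j) (n - 1 - i))
  else if j = i + 1 then -1 else 0

/-- The symbol of the trailing principal `k × k` minor of `topMat n g`, through the recursion
obtained by splitting off the leftmost factor. -/
def symbolSeq (g : ℕ → ℕ → VD n) : ℕ → Polynomial (VD n)
  | 0 => 1
  | k + 1 => Polynomial.X * symbolSeq g k + coeffDel n (symbolSeq g k) +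
      ∑ i : Fin (k + 1), (-1 : ℤ) ^ (k - (i : ℕ)) •
        (Polynomial.C (g (n - 1 - i) (n - 1 - k)) * symbolSeq g i)
  decreasing_by all_goals omega

theorem symbolSeq_succ (g : ℕ → ℕ → VD n) (k : ℕ) : symbolSeq n g (k + 1) =
    Polynomial.X * symbolSeq n g k + coeffDel n (symbolSeq n g k) +
      ∑ i ∈ Finset.range (k + 1), (-1 : ℤ) ^ (k - i) •
        (Polynomial.C (g (n - 1 - i) (n - 1 - k)) * symbolSeq n g i) := by
  rw [symbolSeq, Finset.sum_range]

/-- `symbolSeq n g k` is monic of degree `k`. -/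
theorem symbolSeq_coeff (g : ℕ → ℕ → VD n) (k : ℕ) :
    (symbolSeq n g k).coeff k = 1 ∧ ∀ m, k < m → (symbolSeq n g k).coeff m = 0 := by
  induction k using Nat.strong_induction_on with
  | _ k ih =>
    cases k with
    | zero =>
      rw [symbolSeq]
      refine ⟨by simp, fun m hm => ?_⟩
      rw [Polynomial.coeff_one, if_neg (by omega)]
    | succ k =>
      have hlow : ∀ m, k < m → ∑ i ∈ Finset.range (k + 1), ((-1 : ℤ) ^ (k - i) •
          (Polynomial.C (g (n - 1 - i) (n - 1 - k)) * symbolSeq n g i)).coeff m = 0 := by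
        intro m hm
        refine Finset.sum_eq_zero fun i hi => ?_
        rw [Finset.mem_range] at hi
        rw [Polynomial.coeff_smul, Polynomial.coeff_C_mul, (ih i hi).2 m (by omega), mul_zero,
          smul_zero]
      have hk := ih k (Nat.lt_succ_self k)
      refine ⟨?_, fun m hm => ?_⟩
      · rw [symbolSeq_succ, Polynomial.coeff_add, Polynomial.finsetSum_coeff, hlow _ (by omega),
          Polynomial.coeff_add, Polynomial.coeff_X_mul, coeff_coeffDel, hk.1, hk.2 _ (by omega)]
        simp
      · obtain ⟨m, rfl⟩ : ∃ l, m = l + 1 := ⟨m - 1, by omega⟩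
        rw [symbolSeq_succ, Polynomial.coeff_add, Polynomial.finsetSum_coeff, hlow _ (by omega),
          Polynomial.coeff_add, Polynomial.coeff_X_mul, coeff_coeffDel, hk.2 _ (by omega),
          hk.2 _ (by omega)]
        simp

theorem leftOp_one : leftOp n 1 = 1 := by
  rw [← Polynomial.C_1, ← Polynomial.monomial_zero_left, leftOp_monomial, MD_one]
  simp

theorem rightOp_one : rightOp n 1 = 1 := by
  rw [← Polynomial.C_1, ← Polynomial.monomial_zero_left, rightOp_monomial, MD_one]
  simp

/-- The forward recursion for the leading minors is converted into the backward recursion, in which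
each factor multiplies from the left, as in `symbolSeq`. -/
theorem cdet_topMat (g : ℕ → ℕ → VD n) :
    cdet (topLeft (topMat n g) n) = leftOp n (symbolSeq n g n) := by
  have key := forward_eq_backward n (fun k j => (-1 : ℤ) ^ (k - j) • topMat n g k j)
    (fun k => cdet (topLeft (topMat n g) k)) (fun j => leftOp n (symbolSeq n g (n - j)))
    (cdet_zero_size _) (by simp [symbolSeq, leftOp_one]) ?_ ?_
  · simpa using key
  · intro k _
    rw [cdet_topLeft_succ (topMat n g) 1]
    · simp only [mul_smul_comm]
    · intro i j h
      rw [topMat, if_neg (by omega), if_neg (by omega)]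
    · intro i
      rw [topMat, if_neg (by omega), if_pos rfl]
      simp
  · intro j hj
    obtain ⟨k, rfl⟩ : ∃ k, n = j + k + 1 := ⟨n - j - 1, by omega⟩
    rw [show j + k + 1 - j = k + 1 by omega, symbolSeq_succ, map_add, leftOp_X_mul, map_sum]
    -- substitute the row number `i` by its distance from the bottom row
    have hre : ∑ i ∈ Finset.Ico j (j + k + 1), ((-1 : ℤ) ^ (i - j) • topMat (j + k + 1) g i j) *
          leftOp (j + k + 1) (symbolSeq (j + k + 1) g (j + k + 1 - (i + 1))) =
        ∑ i ∈ Finset.range (k + 1), ((-1 : ℤ) ^ (k - i) • topMat (j + k + 1) g (j + k - i) j) *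
          leftOp (j + k + 1) (symbolSeq (j + k + 1) g i) := by
      rw [Finset.sum_Ico_eq_sum_range, ← Finset.sum_range_reflect,
        show j + k + 1 - j = k + 1 by omega]
      refine Finset.sum_congr rfl fun i hi => ?_
      rw [Finset.mem_range] at hi
      rw [show j + (k + 1 - 1 - i) - j = k - i by omega,
        show j + (k + 1 - 1 - i) = j + k - i by omega,
        show j + k + 1 - (j + k - i + 1) = i by omega]
    rw [hre, Finset.sum_range_succ, Finset.sum_range_succ]
    have hterm : ∀ i ∈ Finset.range k, leftOp (j + k + 1) ((-1 : ℤ) ^ (k - i) •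
        (Polynomial.C (g (j + k + 1 - 1 - i) (j + k + 1 - 1 - k)) * symbolSeq (j + k + 1) g i)) =
        ((-1 : ℤ) ^ (k - i) • topMat (j + k + 1) g (j + k - i) j) *
          leftOp (j + k + 1) (symbolSeq (j + k + 1) g i) := by
      intro i hi
      rw [Finset.mem_range] at hi
      rw [leftOp_zsmul, leftOp_C_mul, topMat, if_pos (by omega), if_neg (by omega), zero_add,
        smul_mul_assoc, show j + k + 1 - 1 - i = j + k - i by omega,
        show j + k + 1 - 1 - k = j by omega]
    rw [Finset.sum_congr rfl hterm, leftOp_zsmul, leftOp_C_mul, topMat, if_pos (by omega),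
      if_pos (by omega), show j + k + 1 - 1 - k = j by omega, show j + k - k = j by omega]
    simp only [Nat.sub_self, pow_zero, one_smul, add_mul]
    abel

/-- The forward recursion for the leading minors of `botMat` is already the adjoint, up to the sign
`(-1)ᵏ`, of the recursion defining `symbolSeq`. -/
theorem cdet_botMat (g : ℕ → ℕ → VD n) (k : ℕ) :
    cdet (topLeft (botMat n g) k) = (-1 : ℤ) ^ k • rightOp n (symbolSeq n g k) := by
  induction k using Nat.strong_induction_on with
  | _ k ih =>
    cases k with
    | zero => simp [cdet_zero_size, symbolSeq, rightOp_one]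
    | succ k =>
      rw [cdet_topLeft_succ (botMat n g) (-1), symbolSeq_succ, map_add, rightOp_X_mul, map_sum,
        Finset.sum_range_succ, Finset.sum_range_succ]
      · have hterm : ∀ i ∈ Finset.range k,
            (- -1 : ℤ) ^ (k - i) • (cdet (topLeft (botMat n g) i) * botMat n g k i) =
            (-1 : ℤ) ^ (k + 1) • rightOp n ((-1 : ℤ) ^ (k - i) •
              (Polynomial.C (g (n - 1 - i) (n - 1 - k)) * symbolSeq n g i)) := by
          intro i hi
          rw [Finset.mem_range] at hi
          have hsign : (-1 : ℤ) ^ (k + 1) * (-1) ^ (k - i) = -(-1) ^ i := by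
            obtain ⟨l, rfl⟩ : ∃ l, k = i + l := ⟨k - i, by omega⟩
            rw [Nat.add_sub_cancel_left, pow_succ, pow_add]
            have : (-1 : ℤ) ^ l * (-1) ^ l = 1 := by rw [← mul_pow]; simp
            linear_combination (-(-1 : ℤ) ^ i) * this
          rw [ih i (by omega), botMat, if_pos (by omega), if_neg (by omega), zero_add, mul_MD_neg,
            rightOp_zsmul, rightOp_C_mul, smul_smul, hsign, neg_neg, one_pow, one_smul,
            smul_mul_assoc, neg_smul]
        rw [Finset.sum_congr rfl hterm, ih k (by omega), botMat, if_pos (by omega), if_pos rfl,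
          rightOp_zsmul, rightOp_C_mul, smul_add, smul_add, Finset.smul_sum, Nat.sub_self,
          pow_succ]
        simp only [pow_zero, one_smul, mul_add, smul_add, mul_MD_neg, smul_neg, mul_neg, mul_one, neg_smul,
          smul_mul_assoc]
        abel
      · intro i j h
        rw [botMat, if_neg (by omega), if_neg (by omega)]
      · intro i
        rw [botMat, if_neg (by omega), if_pos rfl]
        simp

/-- The monic symbol of degree `n` whose lower coefficients, in decreasing degree, are `y`. -/
def monicSymbol (y : Fin n → VD n) : Polynomial (VD n) :=
  Polynomial.monomial n 1 + ∑ i : Fin n, Polynomial.monomial (n - 1 - (i : ℕ)) (y i)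

theorem coeff_monicSymbol (y : Fin n → VD n) (i : Fin n) :
    (monicSymbol n y).coeff (n - 1 - (i : ℕ)) = y i := by
  have := i.isLt
  rw [monicSymbol, Polynomial.coeff_add, Polynomial.coeff_monomial, if_neg (by omega), zero_add,
    Polynomial.finsetSum_coeff, Finset.sum_eq_single i]
  · simp
  · intro j _ hj
    have := j.isLt
    rw [Polynomial.coeff_monomial, if_neg]
    intro h
    exact hj (Fin.ext (by omega))
  · simp

theorem monicSymbol_injective : Function.Injective (monicSymbol n) := fun y z h => by
  funext i
  rw [← coeff_monicSymbol n y i, h, coeff_monicSymbol]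

theorem eq_monicSymbol (p : Polynomial (VD n)) (h1 : p.coeff n = 1)
    (h2 : ∀ m, n < m → p.coeff m = 0) :
    p = monicSymbol n (fun i => p.coeff (n - 1 - (i : ℕ))) := by
  ext1 m
  rcases lt_trichotomy m n with h | rfl | h
  · have := coeff_monicSymbol n (fun i => p.coeff (n - 1 - (i : ℕ))) ⟨n - 1 - m, by omega⟩
    simp only [show n - 1 - (n - 1 - m) = m by omega] at this
    exact this.symm
  · rw [h1, monicSymbol, Polynomial.coeff_add, Polynomial.finsetSum_coeff, Finset.sum_eq_zero]
    · simp
    · intro i _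
      have := i.isLt
      rw [Polynomial.coeff_monomial, if_neg (by omega)]
  · rw [h2 m h, monicSymbol, Polynomial.coeff_add, Polynomial.finsetSum_coeff,
      Finset.sum_eq_zero, Polynomial.coeff_monomial, if_neg (by omega), zero_add]
    intro i _
    rw [Polynomial.coeff_monomial, if_neg (by omega)]

theorem leftOp_monicSymbol (y : Fin n → VD n) : leftOp n (monicSymbol n y) =
    DelD n ^ n + ∑ i : Fin n, MD n (y i) * DelD n ^ (n - 1 - (i : ℕ)) := by
  simp only [monicSymbol, map_add, map_sum, leftOp_monomial, MD_one, one_mul]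

/-- Reordering signs: the adjoint of `∂ⁿ + ∑ yᵢ ∂ⁿ⁻ⁱ` is `(-1)ⁿ (∂ⁿ + ∑ ∂ⁿ⁻ⁱ (-1)ⁱ yᵢ)`. -/
theorem rightOp_monicSymbol (y z : Fin n → VD n)
    (hyz : ∀ i, z i = ((-1 : ℂ) ^ ((i : ℕ) + 1)) • y i) :
    (-1 : ℤ) ^ n • rightOp n (monicSymbol n y) =
      DelD n ^ n + ∑ i : Fin n, DelD n ^ (n - 1 - (i : ℕ)) * MD n (z i) := by
  have hpow : ∀ k, (-DelD n) ^ k = (-1 : ℂ) ^ k • DelD n ^ k := by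
    intro k
    rw [← neg_one_smul ℂ (DelD n), smul_pow]
  have hint : ∀ T : Module.End ℂ (VD n), (-1 : ℤ) ^ n • T = (-1 : ℂ) ^ n • T := by
    intro T
    rw [← Int.cast_smul_eq_zsmul ℂ]
    simp
  simp only [monicSymbol, map_add, map_sum, rightOp_monomial, MD_one, mul_one, hpow, hint,
    smul_add, Finset.smul_sum, smul_smul, smul_mul_assoc]
  congr 1
  · rw [← mul_pow]
    simp
  · refine Finset.sum_congr rfl fun i _ => ?_
    have := i.isLt
    rw [hyz, MD_smul, mul_smul_comm]
    congr 1
    have h : (-1 : ℂ) ^ n = (-1) ^ (n - 1 - (i : ℕ)) * (-1) ^ ((i : ℕ) + 1) := by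
      rw [← pow_add]
      congr 1
      omega
    have h2 : (-1 : ℂ) ^ (n - 1 - (i : ℕ)) * (-1) ^ (n - 1 - (i : ℕ)) = 1 := by
      rw [← mul_pow]
      simp
    rw [h]
    linear_combination (-1 : ℂ) ^ ((i : ℕ) + 1) * h2

/-- The entries of `DtopD n n` below the superdiagonal, with `∂` removed, as a doubly infinite
array (`0` outside the range of the matrix). -/
def entryD (a b : ℕ) : VD n :=
  if h : b ≤ a ∧ a < n then
    if a = n - 1 ∧ b < n - 1 then
      FvarD n ⟨a, by omega⟩ ⟨b, by omega⟩ h.1 - FvarD n ⟨n, by omega⟩ ⟨b, by omega⟩ (by simp; omega)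
    else FvarD n ⟨a, by omega⟩ ⟨b, by omega⟩ h.1
  else 0

theorem DtopD_eq : DtopD n n le_rfl = topLeft (topMat n (entryD n)) n := by
  ext1 a b
  have := a.isLt
  have := b.isLt
  simp only [DtopD, topLeft, topMat, Matrix.of_apply, entryD, Fin.ext_iff]
  split_ifs <;> first | rfl | omega

/-- The skew-symmetry `F_{ij} = -F_{j'i'}`, in `0`-based indices. -/
theorem FvarD_skew (i j i' j' : Fin (2 * n)) (h : (j : ℕ) ≤ i) (h' : (i' : ℕ) ≤ j')
    (hi : (i : ℕ) + i' = 2 * n - 1) (hj : (j : ℕ) + j' = 2 * n - 1) :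
    FvarD n i j h = -FvarD n j' i' h' := by
  have := i.isLt
  have := j.isLt
  obtain ⟨i', hi'⟩ := i'
  obtain ⟨j', hj'⟩ := j'
  obtain rfl : i' = 2 * n - 1 - i := by dsimp only at hi; omega
  obtain rfl : j' = 2 * n - 1 - j := by dsimp only at hj; omega
  simp only [FvarD]
  split_ifs
  · omega
  · omega
  · rw [neg_neg]
    congr 4 <;> ext <;> dsimp only <;> omega
  · omega
  · simp
  · omega
  · rfl
  · omega
  · omega

theorem FvarD_antidiagonal (i j : Fin (2 * n)) (h : (j : ℕ) ≤ i)
    (hij : (i : ℕ) + j = 2 * n - 1) : FvarD n i j h = 0 := by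
  have := i.isLt
  rw [FvarD, dif_neg (by omega), dif_pos hij]

/-- By skew-symmetry the entry `F_{a'b'}` of `DbotD` is minus the entry `F_{ba}` of `DtopD`; the
modified first column matches the modified last row, where `F_{n'n} = 0` accounts for the corner. -/
theorem DbotD_eq : DbotD n n le_rfl = topLeft (botMat n (entryD n)) n := by
  ext1 c d
  have hc' := c.isLt
  have hd' := d.isLt
  simp only [DbotD, topLeft, botMat, Matrix.of_apply, Fin.ext_iff]
  by_cases h : (d : ℕ) ≤ c
  swap
  · simp [h]
  rw [dif_pos h, if_pos h]
  congr 2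
  rw [entryD, dif_pos (show n - 1 - (c : ℕ) ≤ n - 1 - d ∧ n - 1 - (d : ℕ) < n by omega)]
  by_cases h0 : (d : ℕ) = 0
  · rw [dif_pos (And.intro trivial h0)]
    rw [FvarD_skew n _ _ ⟨n - 1 - c, by omega⟩ ⟨n - 1 - d, by omega⟩ _ (by dsimp only; omega)
      (by dsimp only; omega) (by dsimp only; omega)]
    by_cases hc : (c : ℕ) = 0
    · rw [if_neg (by omega), FvarD_antidiagonal n _ ⟨n - 1, _⟩ _ (by dsimp only; omega), sub_zero]
    · rw [if_pos (by omega)]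
      rw [FvarD_skew n _ ⟨n - 1, _⟩ ⟨n - 1 - c, by omega⟩ ⟨n, by omega⟩ _ (by dsimp only; omega)
        (by dsimp only; omega) (by dsimp only; omega)]
      abel
  · rw [dif_neg (by omega), if_neg (by omega)]
    exact FvarD_skew n _ _ _ _ _ _ (by dsimp only; omega) (by dsimp only; omega)

end Operators

/-- Lemma 6.1 of Molev–Ragoucy: with `y_i`, `ȳ_i` the unique elements of `V` satisfying
`D_n = ∂^n + ∑_i M_{y_i}∘∂^{n−i}` and `D̄_n = ∂^n + ∑_i ∂^{n−i}∘M_{ȳ_i}`, one has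
`ȳ_i = (−1)^i y_i` for all `i = 1, …, n`. -/
theorem typeD_ybar_eq_neg_y (n : ℕ) (hn : 2 ≤ n) :
    (∃! y : Fin n → VD n,
        cdet (DtopD n n le_rfl) =
          DelD n ^ n + ∑ i : Fin n, MD n (y i) * DelD n ^ (n - 1 - (i : ℕ))) ∧
      (∃! ybar : Fin n → VD n,
          cdet (DbotD n n le_rfl) =
            DelD n ^ n + ∑ i : Fin n, DelD n ^ (n - 1 - (i : ℕ)) * MD n (ybar i)) ∧
      ∀ (y ybar : Fin n → VD n),
        cdet (DtopD n n le_rfl) =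
            DelD n ^ n + ∑ i : Fin n, MD n (y i) * DelD n ^ (n - 1 - (i : ℕ)) →
          cdet (DbotD n n le_rfl) =
              DelD n ^ n + ∑ i : Fin n, DelD n ^ (n - 1 - (i : ℕ)) * MD n (ybar i) →
            ∀ i : Fin n, ybar i = ((-1 : ℂ) ^ ((i : ℕ) + 1)) • y i := by
  set q := symbolSeq n (entryD n) n with hq
  obtain ⟨h1, h2⟩ := symbolSeq_coeff n (entryD n) n
  obtain ⟨y₀, hy₀⟩ : ∃ y₀, q = monicSymbol n y₀ := ⟨_, eq_monicSymbol n q h1 h2⟩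
  have hsq : ∀ (i : Fin n) (v : VD n),
      ((-1 : ℂ) ^ ((i : ℕ) + 1)) • ((-1 : ℂ) ^ ((i : ℕ) + 1)) • v = v := by
    intro i v
    rw [smul_smul, ← mul_pow]
    simp
  have htop : ∀ y, cdet (DtopD n n le_rfl) =
      DelD n ^ n + ∑ i : Fin n, MD n (y i) * DelD n ^ (n - 1 - (i : ℕ)) ↔ y = y₀ := by
    intro y
    rw [DtopD_eq, cdet_topMat, ← leftOp_monicSymbol, ← hq, hy₀,
      (leftOp_injective n hn).eq_iff, (monicSymbol_injective n).eq_iff, eq_comm]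
  have hbot : ∀ z, cdet (DbotD n n le_rfl) =
      DelD n ^ n + ∑ i : Fin n, DelD n ^ (n - 1 - (i : ℕ)) * MD n (z i) ↔
      z = fun i : Fin n => ((-1 : ℂ) ^ ((i : ℕ) + 1)) • y₀ i := by
    intro z
    have hunit : IsUnit ((-1 : ℤ) ^ n) := (isUnit_neg_one).pow n
    rw [DbotD_eq, cdet_botMat,
      ← rightOp_monicSymbol n (fun i : Fin n => ((-1 : ℂ) ^ ((i : ℕ) + 1)) • z i) z
        (fun i => (hsq i _).symm), ← hq, hy₀, hunit.smul_left_cancel,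
      (rightOp_injective n hn).eq_iff, (monicSymbol_injective n).eq_iff]
    constructor
    · rintro rfl
      funext i
      exact (hsq i _).symm
    · rintro rfl
      funext i
      exact (hsq i _).symm
  refine ⟨⟨y₀, (htop _).2 rfl, fun y hy => (htop y).1 hy⟩,
    ⟨_, (hbot _).2 rfl, fun z hz => (hbot z).1 hz⟩, fun y z hy hz i => ?_⟩
  rw [(htop y).1 hy, (hbot z).1 hz]

end
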